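/- Let b > 1 and β ∈ (0, 1/2). There exists a constant C₁ > 0, depending only on b and β, such that for all x, y ∈ [0,1] with 0 < |x − y| ≤ 1/(2b²), the real random variable X(Θ, Λ) = |f_{Θ,Λ}(x) − f_{Θ,Λ}(y)|² (where (Θ, Λ) is distributed according to the infinite product of uniform measures on [0,1]) has a probability density function h : ℝ → [0, ∞) with respect to Lebesgue measure, and h(t) ≤ C₁ |x − y|^{−2β} for all t. -/

import Mathlib

open MeasureTheory

/-- First coordinate of the random vector-valued Weierstrass function
`t ↦ ∑ b^{-βn} cos(2π(bⁿ t + θₙ))`. -/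
noncomputable def W1 (b β : ℝ) (Θ : ℕ → ℝ) (t : ℝ) : ℝ :=
  ∑' n : ℕ, b ^ (-β * (n : ℝ)) * Real.cos (2 * Real.pi * (b ^ n * t + Θ n))

/-- Second coordinate of the random vector-valued Weierstrass function
`t ↦ ∑ b^{-βn} sin(2π(bⁿ t + λₙ))`. -/
noncomputable def W2 (b β : ℝ) (Λ : ℕ → ℝ) (t : ℝ) : ℝ :=
  ∑' n : ℕ, b ^ (-β * (n : ℝ)) * Real.sin (2 * Real.pi * (b ^ n * t + Λ n))

/-- Euclidean distance `|f_{Θ,Λ}(x) - f_{Θ,Λ}(y)|` in ℝ². -/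
noncomputable def Wdist (b β : ℝ) (Θ Λ : ℕ → ℝ) (x y : ℝ) : ℝ :=
  Real.sqrt ((W1 b β Θ x - W1 b β Θ y) ^ 2 + (W2 b β Λ x - W2 b β Λ y) ^ 2)

/-- The graph `G(f_{Θ,Λ}) = {(t, f_{Θ,Λ}(t)) : t ∈ [0,1]}` inside ℝ³ = ℝ × ℝ². -/
def Wgraph (b β : ℝ) (Θ Λ : ℕ → ℝ) : Set (ℝ × ℝ × ℝ) :=
  {p | ∃ t ∈ Set.Icc (0 : ℝ) 1, p = (t, W1 b β Θ t, W2 b β Λ t)}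

/-- `μ` is the infinite product over `ℕ` of the uniform probability measures on `[0,1]`:
the measure of every measurable cylinder is the corresponding finite product of
uniform measures. -/
def IsUniformProductMeasure (μ : Measure (ℕ → ℝ)) : Prop :=
  ∀ (t : Finset ℕ) (s : ℕ → Set ℝ), (∀ i, MeasurableSet (s i)) →
    μ {f : ℕ → ℝ | ∀ i ∈ t, f i ∈ s i} =
      ∏ i ∈ t, (volume.restrict (Set.Icc (0 : ℝ) 1)) (s i)

/-!
Write the increment of a coordinate of `f` between `x` and `y` as a random cosine series with
amplitudes `2 b^{-βn} sin(π bⁿ (x - y))`. Three consecutive indices `n` satisfy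
`1 / (2 b³) ≤ bⁿ|x - y| ≤ 1 / 2`, and their amplitudes are bounded below by a multiple `δ` of
`|x - y|^β`. The cosine of a uniform phase has an arcsine law, whose density lies in `L^{3/2}`, and
the pointwise bound `pqr ≤ (pq)^{3/2} + (pr)^{3/2} + (qr)^{3/2}` integrates to a three-factor Young
inequality `L^{3/2} * L^{3/2} * L^{3/2} ⊆ L^∞`, so the sum of these three terms has a
density of size `O(δ⁻¹)`. The other terms are independent of them, and convolution with a
probability measure preserves the bound. The two coordinates are independent, so the increment
of `f` has a planar density of size `O(δ⁻²)`; in polar coordinates the squared radius of planar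
Lebesgue measure has constant density `π`, which gives the bound `O(δ⁻²)` for the squared distance.
-/

section

open Set ProbabilityTheory
open scoped ENNReal Real

section Young

theorem mul_mul_le_rpow_mul_rpow_of_le {p q r : ℝ≥0∞} (hp : r ≤ p) (hq : r ≤ q) :
    p * q * r ≤ p ^ (3 / 2 : ℝ) * q ^ (3 / 2 : ℝ) := by
  have hr : r ≤ (p * q) ^ (1 / 2 : ℝ) := calc
    r = (r * r) ^ (1 / 2 : ℝ) := by
      rw [← pow_two, ← ENNReal.rpow_natCast, ← ENNReal.rpow_mul]; norm_num
    _ ≤ (p * q) ^ (1 / 2 : ℝ) := by gcongr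
  calc p * q * r ≤ (p * q) ^ (1 : ℝ) * (p * q) ^ (1 / 2 : ℝ) := by
        rw [ENNReal.rpow_one]; gcongr
    _ = (p * q) ^ (3 / 2 : ℝ) := by
      rw [← ENNReal.rpow_add_of_nonneg _ _ zero_le_one (by norm_num)]; norm_num
    _ = p ^ (3 / 2 : ℝ) * q ^ (3 / 2 : ℝ) := ENNReal.mul_rpow_of_nonneg _ _ (by norm_num)

theorem mul_mul_le_add_rpow_mul_rpow (p q r : ℝ≥0∞) :
    p * q * r ≤ p ^ (3 / 2 : ℝ) * q ^ (3 / 2 : ℝ) + p ^ (3 / 2 : ℝ) * r ^ (3 / 2 : ℝ) +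
      q ^ (3 / 2 : ℝ) * r ^ (3 / 2 : ℝ) := by
  obtain ⟨hp, hq⟩ | ⟨hp, hr⟩ | ⟨hq, hr⟩ :
      r ≤ p ∧ r ≤ q ∨ q ≤ p ∧ q ≤ r ∨ p ≤ q ∧ p ≤ r := by grind
  · exact (mul_mul_le_rpow_mul_rpow_of_le hp hq).trans (le_add_right le_self_add)
  · rw [mul_right_comm]
    exact (mul_mul_le_rpow_mul_rpow_of_le hp hr).trans (le_add_right le_add_self)
  · rw [mul_assoc, mul_comm]
    exact (mul_mul_le_rpow_mul_rpow_of_le hq hr).trans le_add_self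

theorem prod_prod_withDensity_le {α β γ : Type*} [MeasurableSpace α] [MeasurableSpace β]
    [MeasurableSpace γ] {μ : Measure α} {ν : Measure β} {ρ : Measure γ} [SFinite μ] [SFinite ν]
    [SFinite ρ] {f : α → ℝ≥0∞} {g : β → ℝ≥0∞} {h : γ → ℝ≥0∞} (hf : Measurable f)
    (hg : Measurable g) (hh : Measurable h) :
    ((μ.withDensity f).prod (ν.withDensity g)).prod (ρ.withDensity h) ≤
      ((μ.withDensity fun x => f x ^ (3 / 2 : ℝ)).prod
          (ν.withDensity fun y => g y ^ (3 / 2 : ℝ))).prod ρ +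
        ((μ.withDensity fun x => f x ^ (3 / 2 : ℝ)).prod ν).prod
          (ρ.withDensity fun z => h z ^ (3 / 2 : ℝ)) +
        (μ.prod (ν.withDensity fun y => g y ^ (3 / 2 : ℝ))).prod
          (ρ.withDensity fun z => h z ^ (3 / 2 : ℝ)) := by
  rw [prod_withDensity hf hg, prod_withDensity (by fun_prop) hh,
    prod_withDensity (hf.pow_const _) (hg.pow_const _), prod_withDensity_left (by fun_prop),
    prod_withDensity_left (hf.pow_const _), prod_withDensity (by fun_prop) (hh.pow_const _),
    prod_withDensity_right (hg.pow_const _), prod_withDensity (by fun_prop) (hh.pow_const _),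
    ← withDensity_add_left (by fun_prop), ← withDensity_add_left (by fun_prop)]
  exact withDensity_mono <| .of_forall fun p =>
    mul_mul_le_add_rpow_mul_rpow (f p.1.1) (g p.1.2) (h p.2)

variable {M : Type*} [AddMonoid M] [MeasurableSpace M] [MeasurableAdd₂ M]

theorem conv_univ (κ ρ : Measure M) [SFinite ρ] :
    (κ ∗ ρ) univ = κ univ * ρ univ := by
  rw [Measure.conv, Measure.map_apply measurable_add .univ, preimage_univ,
    ← univ_prod_univ, Measure.prod_prod]

theorem conv_mono {κ κ' ρ ρ' : Measure M} [SFinite ρ] [SFinite ρ'] (hκ : κ ≤ κ') (hρ : ρ ≤ ρ') :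
    κ ∗ ρ ≤ κ' ∗ ρ' :=
  Measure.map_mono (Measure.prod_mono hκ hρ) measurable_add

theorem conv_conv_eq_map (κ ρ τ : Measure M) [SFinite κ] [SFinite ρ] [SFinite τ] :
    (κ ∗ ρ) ∗ τ = ((κ.prod ρ).prod τ).map fun p => p.1.1 + p.1.2 + p.2 := by
  nth_rw 1 [Measure.conv, Measure.conv, ← Measure.map_id (μ := τ)]
  rw [Measure.map_prod_map _ _ measurable_add measurable_id,
    Measure.map_map measurable_add (by fun_prop)]
  rfl

theorem conv_eq_smul_of_isAddLeftInvariant {G : Type*} [AddGroup G] [MeasurableSpace G]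
    [MeasurableAdd₂ G] {ν : Measure G} [SFinite ν] [ν.IsAddLeftInvariant] (κ : Measure G) :
    κ ∗ ν = κ univ • ν := by
  refine Measure.ext_of_lintegral _ fun φ hφ => ?_
  simp only [Measure.lintegral_conv hφ, lintegral_add_left_eq_self, lintegral_const,
    lintegral_smul_measure, smul_eq_mul, mul_comm]

variable {E : Type*} [AddCommGroup E] [MeasurableSpace E] [MeasurableAdd₂ E]
  {ν : Measure E} [SFinite ν] [ν.IsAddLeftInvariant]

theorem conv_le_smul_of_le {κ ρ : Measure E} [IsProbabilityMeasure ρ]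
    {K : ℝ≥0∞} (h : κ ≤ K • ν) : κ ∗ ρ ≤ K • ν := calc
  κ ∗ ρ ≤ (K • ν) ∗ ρ := conv_mono h le_rfl
  _ = K • ν := by
    rw [Measure.conv_smul_left, Measure.conv_comm, conv_eq_smul_of_isAddLeftInvariant,
      measure_univ, one_smul]

theorem conv_conv_withDensity_le {f g h : E → ℝ≥0∞}
    (hf : Measurable f) (hg : Measurable g) (hh : Measurable h) :
    (ν.withDensity f ∗ ν.withDensity g) ∗ ν.withDensity h ≤
      ((∫⁻ x, f x ^ (3 / 2 : ℝ) ∂ν) * (∫⁻ x, g x ^ (3 / 2 : ℝ) ∂ν) +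
        (∫⁻ x, f x ^ (3 / 2 : ℝ) ∂ν) * (∫⁻ x, h x ^ (3 / 2 : ℝ) ∂ν) +
        (∫⁻ x, g x ^ (3 / 2 : ℝ) ∂ν) * (∫⁻ x, h x ^ (3 / 2 : ℝ) ∂ν)) • ν := by
  let F := ν.withDensity fun x => f x ^ (3 / 2 : ℝ)
  let G := ν.withDensity fun x => g x ^ (3 / 2 : ℝ)
  let H := ν.withDensity fun x => h x ^ (3 / 2 : ℝ)
  calc (ν.withDensity f ∗ ν.withDensity g) ∗ ν.withDensity h
    _ ≤ (F ∗ G) ∗ ν + (F ∗ ν) ∗ H + (ν ∗ G) ∗ H := by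
      simp only [conv_conv_eq_map]
      rw [← Measure.map_add _ _ (by fun_prop), ← Measure.map_add _ _ (by fun_prop)]
      exact Measure.map_mono (prod_prod_withDensity_le hf hg hh) (by fun_prop)
    _ = (F ∗ G) ∗ ν + (F ∗ H) ∗ ν + (G ∗ H) ∗ ν := by
      rw [Measure.conv_comm ν G, Measure.conv_assoc F ν H, Measure.conv_assoc G ν H,
        Measure.conv_comm ν H, ← Measure.conv_assoc F H ν, ← Measure.conv_assoc G H ν]
    _ = _ := by
      simp only [conv_eq_smul_of_isAddLeftInvariant, conv_univ, F, G, H,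
        withDensity_apply _ MeasurableSet.univ, Measure.restrict_univ, add_smul]

end Young

section Arcsine

theorem lintegral_Ioc_add_eq_of_periodic {α : ℝ → ℝ≥0∞} {T : ℝ} (hα : Function.Periodic α T)
    (hT : 0 < T) (s t : ℝ) : ∫⁻ u in Ioc s (s + T), α u = ∫⁻ u in Ioc t (t + T), α u := by
  have : VAddInvariantMeasure (AddSubgroup.zmultiples T) ℝ volume :=
    ⟨fun c s _ => measure_preimage_add _ _ _⟩
  exact (isAddFundamentalDomain_Ioc hT s).setLIntegral_eq (isAddFundamentalDomain_Ioc hT t) α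
    hα.map_vadd_zmultiples

theorem lintegral_Icc_comp_add_left_of_periodic {α : ℝ → ℝ≥0∞} {T : ℝ}
    (hα : Function.Periodic α T) (hT : 0 < T) (c : ℝ) :
    ∫⁻ u in Icc 0 T, α (c + u) = ∫⁻ u in Ioc (-(T / 2)) (T / 2), α u := by
  have hc : Function.Periodic (fun u => α (c + u)) T := fun u => by
    simp only [← add_assoc, hα _]
  calc ∫⁻ u in Icc 0 T, α (c + u)
    _ = ∫⁻ u in Ioc (-(T / 2) - c) (-(T / 2) - c + T), α (c + u) := by
      rw [← restrict_Ioc_eq_restrict_Icc, ← lintegral_Ioc_add_eq_of_periodic hc hT 0, zero_add]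
    _ = ∫⁻ u in (c + ·) ⁻¹' Ioc (-(T / 2)) (T / 2), α (c + u) := by
      rw [preimage_const_add_Ioc, show -(T / 2) - c + T = T / 2 - c by ring]
    _ = ∫⁻ u in Ioc (-(T / 2)) (T / 2), α u :=
      (measurePreserving_add_left volume c).setLIntegral_comp_preimage_emb
        (measurableEmbedding_addLeft c) α _

theorem lintegral_Ioc_neg_eq_two_mul_of_even {α : ℝ → ℝ≥0∞} (hα : Function.Even α)
    {r : ℝ} (hr : 0 ≤ r) :
    ∫⁻ u in Ioc (-r) r, α u = 2 * ∫⁻ u in Ioo 0 r, α u := by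
  have hneg : ∫⁻ u in Ioc (-r) 0, α u = ∫⁻ u in Ico 0 r, α u := by
    have := (Measure.measurePreserving_neg (volume : Measure ℝ)).setLIntegral_comp_preimage_emb
      (MeasurableEquiv.neg ℝ).measurableEmbedding α (Ioc (-r) 0)
    simpa [hα _] using this.symm
  rw [← Ioc_union_Ioc_eq_Ioc (neg_nonpos.2 hr) hr, lintegral_union measurableSet_Ioc
    (Ioc_disjoint_Ioc_of_le le_rfl), hneg, restrict_Ico_eq_restrict_Ioc, two_mul,
    restrict_Ioo_eq_restrict_Ioc]

/-- Density of the arcsine law on `(-1, 1)`. Off that interval the square root vanishes, and with it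
the inverse. -/
noncomputable def arcsineDensity (s : ℝ) : ℝ≥0∞ :=
  ENNReal.ofReal (π * √(1 - s ^ 2))⁻¹

theorem measurable_arcsineDensity : Measurable arcsineDensity := by
  unfold arcsineDensity; fun_prop

theorem arcsineDensity_of_notMem {s : ℝ} (hs : s ∉ Ioo (-1) 1) : arcsineDensity s = 0 := by
  have : 1 - s ^ 2 ≤ 0 := by
    rw [mem_Ioo, ← abs_lt, ← sq_lt_one_iff_abs_lt_one] at hs
    linarith
  simp [arcsineDensity, Real.sqrt_eq_zero_of_nonpos this]

theorem image_arccos_div_two_pi_Ioo :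
    (fun s => Real.arccos s / (2 * π)) '' Ioo (-1) 1 = Ioo 0 (1 / 2) := by
  have hπ := Real.pi_pos
  ext v
  constructor
  · rintro ⟨s, hs, rfl⟩
    have := Real.arccos_pos.2 hs.2
    have := Real.arccos_lt_pi.2 hs.1
    exact ⟨by positivity, by rw [div_lt_div_iff₀] <;> linarith⟩
  · rintro ⟨hv₀, hv⟩
    have hv' : Real.arccos (Real.cos (2 * π * v)) = 2 * π * v :=
      Real.arccos_cos (by positivity) (by nlinarith)
    refine ⟨Real.cos (2 * π * v), ⟨Real.arccos_lt_pi.1 ?_, Real.arccos_pos.1 ?_⟩, ?_⟩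
    · rw [hv']; nlinarith
    · rw [hv']; positivity
    · dsimp only
      rw [hv', mul_div_cancel_left₀ _ (by positivity)]

theorem two_mul_lintegral_Ioo_comp_cos (φ : ℝ → ℝ≥0∞) :
    2 * ∫⁻ u in Ioo 0 (1 / 2), φ (Real.cos (2 * π * u)) = ∫⁻ s, arcsineDensity s * φ s := by
  have hderiv : ∀ s ∈ Ioo (-1 : ℝ) 1, HasDerivWithinAt (fun s => Real.arccos s / (2 * π))
      (-(1 / √(1 - s ^ 2)) / (2 * π)) (Ioo (-1) 1) s := fun s hs =>
    ((Real.hasDerivAt_arccos hs.1.ne' hs.2.ne).div_const _).hasDerivWithinAt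
  have hinj : InjOn (fun s => Real.arccos s / (2 * π)) (Ioo (-1) 1) := fun s hs t ht hst =>
    Real.arccos_injOn (Ioo_subset_Icc_self hs) (Ioo_subset_Icc_self ht) (by simpa using hst)
  have hweight : ∀ s, 2 * ENNReal.ofReal |-(1 / √(1 - s ^ 2)) / (2 * π)| = arcsineDensity s := by
    intro s
    rw [neg_div, abs_neg, abs_of_nonneg (by positivity), ← ENNReal.ofReal_ofNat 2,
      ← ENNReal.ofReal_mul zero_le_two, arcsineDensity]
    congr 1
    field_simp
  have hsupp : Function.support (fun s => arcsineDensity s * φ s) ⊆ Ioo (-1) 1 := fun s hs =>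
    not_imp_comm.1 arcsineDensity_of_notMem (left_ne_zero_of_mul hs)
  rw [← image_arccos_div_two_pi_Ioo,
    lintegral_image_eq_lintegral_abs_deriv_mul measurableSet_Ioo hderiv hinj,
    ← lintegral_const_mul' _ _ (by simp), ← setLIntegral_eq_of_support_subset hsupp]
  refine setLIntegral_congr_fun measurableSet_Ioo fun s hs => ?_
  rw [← mul_assoc, hweight, mul_div_cancel₀ _ (by positivity), Real.cos_arccos hs.1.le hs.2.le]

theorem map_cos_eq_withDensity_arcsineDensity (c : ℝ) :
    (volume.restrict (Icc (0 : ℝ) 1)).map (fun u => Real.cos (2 * π * (c + u))) =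
      volume.withDensity arcsineDensity := by
  refine Measure.ext_of_lintegral _ fun φ hφ => ?_
  have hper : Function.Periodic (fun u => φ (Real.cos (2 * π * u))) 1 := fun u => by
    simp only [mul_add, mul_one, Real.cos_add_two_pi]
  have heven : Function.Even (fun u => φ (Real.cos (2 * π * u))) := fun u => by
    simp only [mul_neg, Real.cos_neg]
  rw [lintegral_map hφ (by fun_prop), lintegral_Icc_comp_add_left_of_periodic hper one_pos c,
    lintegral_Ioc_neg_eq_two_mul_of_even heven (by norm_num), two_mul_lintegral_Ioo_comp_cos,
    lintegral_withDensity_eq_lintegral_mul _ measurable_arcsineDensity hφ]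
  rfl

theorem one_sub_sq_rpow_le {s p : ℝ} (hs : s ∈ Ioo (-1) 1) (hp : p ≤ 0) :
    (1 - s ^ 2) ^ p ≤ (1 - s) ^ p + (1 + s) ^ p := by
  have h₁ : 0 < 1 - s := by linarith [hs.2]
  have h₂ : 0 < 1 + s := by linarith [hs.1]
  obtain h | h := le_total 0 s
  · exact (Real.rpow_le_rpow_of_nonpos h₁ (by nlinarith) hp).trans
      (le_add_of_nonneg_right (by positivity))
  · exact (Real.rpow_le_rpow_of_nonpos h₂ (by nlinarith) hp).trans
      (le_add_of_nonneg_left (by positivity))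

theorem integrableOn_one_sub_rpow_add_one_add_rpow {p : ℝ} (hp : -1 < p) :
    IntegrableOn (fun s : ℝ => (1 - s) ^ p + (1 + s) ^ p) (Ioo (-1) 1) := by
  have hsub : IntervalIntegrable (fun s : ℝ => (1 - s) ^ p) volume (1 - 2) (1 - 0) :=
    (intervalIntegral.intervalIntegrable_rpow' hp).comp_sub_left 1
  have hadd : IntervalIntegrable (fun s : ℝ => (1 + s) ^ p) volume (0 - 1) (2 - 1) :=
    (intervalIntegral.intervalIntegrable_rpow' hp).comp_add_left 1
  rw [show (1 : ℝ) - 2 = -1 by norm_num, sub_zero] at hsub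
  rw [show (0 : ℝ) - 1 = -1 by norm_num, show (2 : ℝ) - 1 = 1 by norm_num] at hadd
  exact (intervalIntegrable_iff_integrableOn_Ioo_of_le (by norm_num)).1 (hsub.add hadd)

theorem lintegral_arcsineDensity_rpow_lt_top :
    ∫⁻ s, arcsineDensity s ^ (3 / 2 : ℝ) < ∞ := by
  have hsupp : Function.support (fun s => arcsineDensity s ^ (3 / 2 : ℝ)) ⊆ Ioo (-1) 1 :=
    fun s hs => not_imp_comm.1 arcsineDensity_of_notMem fun h => hs (by simp [h])
  rw [← setLIntegral_eq_of_support_subset hsupp]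
  refine lt_of_le_of_lt (setLIntegral_mono' measurableSet_Ioo fun s hs => ?_)
    (integrableOn_one_sub_rpow_add_one_add_rpow
      (p := -(3 / 4)) (by norm_num)).lintegral_lt_top
  rw [arcsineDensity, ENNReal.ofReal_rpow_of_nonneg (by positivity) (by norm_num)]
  have hpos : 0 < 1 - s ^ 2 := by nlinarith [hs.1, hs.2]
  gcongr
  calc (π * √(1 - s ^ 2))⁻¹ ^ (3 / 2 : ℝ)
    _ ≤ (√(1 - s ^ 2))⁻¹ ^ (3 / 2 : ℝ) := by
      gcongr
      exact le_mul_of_one_le_left (by positivity) (by linarith [Real.pi_gt_three])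
    _ = (1 - s ^ 2) ^ (-(3 / 4) : ℝ) := by
      rw [Real.sqrt_eq_rpow, ← Real.rpow_neg hpos.le, ← Real.rpow_mul hpos.le]; norm_num
    _ ≤ _ := one_sub_sq_rpow_le hs (by norm_num)

end Arcsine

section Dilation

theorem lintegral_comp_mul_left {a : ℝ} (ha : a ≠ 0) (φ : ℝ → ℝ≥0∞) :
    ∫⁻ x, φ (a * x) = ENNReal.ofReal |a⁻¹| * ∫⁻ x, φ x := by
  rw [← (measurableEmbedding_mulLeft₀ ha).lintegral_map, Real.map_volume_mul_left ha,
    lintegral_smul_measure, smul_eq_mul]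

theorem map_mul_left_withDensity {a : ℝ} (ha : a ≠ 0) {g : ℝ → ℝ≥0∞} (hg : Measurable g) :
    (volume.withDensity g).map (a * ·) =
      volume.withDensity fun x => ENNReal.ofReal |a⁻¹| * g (a⁻¹ * x) := by
  refine Measure.ext_of_lintegral _ fun φ hφ => ?_
  rw [lintegral_map hφ (by fun_prop), lintegral_withDensity_eq_lintegral_mul _ hg (by fun_prop),
    lintegral_withDensity_eq_lintegral_mul _ (by fun_prop) hφ]
  calc ∫⁻ x, g x * φ (a * x)
    _ = ∫⁻ x, g (a⁻¹ * (a * x)) * φ (a * x) := by simp only [inv_mul_cancel_left₀ ha]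
    _ = ENNReal.ofReal |a⁻¹| * ∫⁻ x, g (a⁻¹ * x) * φ x :=
      lintegral_comp_mul_left ha fun x => g (a⁻¹ * x) * φ x
    _ = ∫⁻ x, ENNReal.ofReal |a⁻¹| * g (a⁻¹ * x) * φ x := by
      simp only [mul_assoc, lintegral_const_mul' _ _ ENNReal.ofReal_ne_top]

theorem lintegral_dilation_rpow {a : ℝ} (ha : a ≠ 0) {p : ℝ} (hp : 0 ≤ p) (g : ℝ → ℝ≥0∞) :
    ∫⁻ x, (ENNReal.ofReal |a⁻¹| * g (a⁻¹ * x)) ^ p =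
      ENNReal.ofReal |a| ^ (1 - p) * ∫⁻ x, g x ^ p := by
  have h0 : ENNReal.ofReal |a| ≠ 0 := by simpa using ha
  have hinv : ENNReal.ofReal |a⁻¹| ^ p = ENNReal.ofReal |a| ^ (-p) := by
    rw [abs_inv, ENNReal.ofReal_inv_of_pos (abs_pos.2 ha), ENNReal.inv_rpow, ENNReal.rpow_neg]
  simp only [ENNReal.mul_rpow_of_nonneg _ _ hp]
  rw [lintegral_const_mul' _ _ (by finiteness),
    lintegral_comp_mul_left (inv_ne_zero ha) fun x => g x ^ p, inv_inv, hinv, ← mul_assoc,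
    sub_eq_neg_add, ENNReal.rpow_add _ _ h0 ENNReal.ofReal_ne_top, ENNReal.rpow_one]

theorem lintegral_dilation_rpow_three_halves_le {δ a : ℝ} (hδ : 0 < δ) (ha : δ ≤ |a|)
    (g : ℝ → ℝ≥0∞) :
    ∫⁻ x, (ENNReal.ofReal |a⁻¹| * g (a⁻¹ * x)) ^ (3 / 2 : ℝ) ≤
      ENNReal.ofReal δ ^ (-(1 / 2) : ℝ) * ∫⁻ x, g x ^ (3 / 2 : ℝ) := by
  rw [lintegral_dilation_rpow (abs_pos.1 (hδ.trans_le ha)) (by norm_num),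
    show (1 : ℝ) - 3 / 2 = -(1 / 2) by norm_num, ENNReal.rpow_neg, ENNReal.rpow_neg]
  gcongr

theorem conv_conv_map_mul_left_le {g : ℝ → ℝ≥0∞} (hg : Measurable g) {δ a b c : ℝ} (hδ : 0 < δ)
    (ha : δ ≤ |a|) (hb : δ ≤ |b|) (hc : δ ≤ |c|) :
    ((volume.withDensity g).map (a * ·) ∗ (volume.withDensity g).map (b * ·)) ∗
        (volume.withDensity g).map (c * ·) ≤
      (3 * (∫⁻ x, g x ^ (3 / 2 : ℝ)) ^ 2 / ENNReal.ofReal δ) • volume := by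
  have hne {r : ℝ} (hr : δ ≤ |r|) : r ≠ 0 := abs_pos.1 (hδ.trans_le hr)
  have hle {r : ℝ} (hr : δ ≤ |r|) := lintegral_dilation_rpow_three_halves_le hδ hr g
  set J := ENNReal.ofReal δ ^ (-(1 / 2) : ℝ) * ∫⁻ x, g x ^ (3 / 2 : ℝ) with hJ
  have hconst : 3 * (∫⁻ x, g x ^ (3 / 2 : ℝ)) ^ 2 / ENNReal.ofReal δ = J * J + J * J + J * J := by
    have hδ2 : (ENNReal.ofReal δ)⁻¹ = (ENNReal.ofReal δ ^ (-(1 / 2) : ℝ)) ^ 2 := by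
      rw [← ENNReal.rpow_natCast, ← ENNReal.rpow_mul, ← ENNReal.rpow_neg_one]
      norm_num
    rw [hJ, div_eq_mul_inv, hδ2]
    ring
  rw [map_mul_left_withDensity (hne ha) hg, map_mul_left_withDensity (hne hb) hg,
    map_mul_left_withDensity (hne hc) hg, hconst]
  refine (conv_conv_withDensity_le (by fun_prop) (by fun_prop) (by fun_prop)).trans ?_
  gcongr (?_ * ?_ + ?_ * ?_ + ?_ * ?_) • _
  exacts [hle ha, hle hb, hle ha, hle hc, hle hb, hle hc]

end Dilation

section Indep

variable {ι E Ω : Type*} [NormedAddCommGroup E] [MeasurableSpace E] [BorelSpace E]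
  [SecondCountableTopology E] [MeasurableSpace Ω] {P : Measure Ω} {X : ι → Ω → E}

theorem map_sum_triple_eq_conv [DecidableEq ι] [IsFiniteMeasure P] (hX : ∀ n, Measurable (X n))
    (hind : iIndepFun X P) {i j k : ι} (hij : i ≠ j) (hik : i ≠ k) (hjk : j ≠ k) :
    P.map (fun ω => ∑ n ∈ {i, j, k}, X n ω) = (P.map (X i) ∗ P.map (X j)) ∗ P.map (X k) := by
  have hsum : (fun ω => ∑ n ∈ {i, j, k}, X n ω) = X i + X j + X k := by
    ext ω
    rw [Finset.sum_insert (by simp [hij, hik]), Finset.sum_pair hjk, ← add_assoc]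
    rfl
  rw [hsum, (hind.indepFun_add_left hX i j k hik hjk).map_add_eq_map_conv_map
    ((hX i).add (hX j)) (hX k), (hind.indepFun hij).map_add_eq_map_conv_map (hX i) (hX j)]

variable [Countable ι]

theorem measurable_tsum {α : Type*} {_ : MeasurableSpace α} {f : ι → α → E}
    (hf : ∀ i, Measurable (f i)) (hsum : ∀ a, Summable fun i => f i a) :
    Measurable fun a => ∑' i, f i a :=
  measurable_of_tendsto_metrizable' Filter.atTop (fun s => s.measurable_fun_sum fun i _ => hf i)
    (tendsto_pi_nhds.2 fun a => (hsum a).hasSum)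

theorem indepFun_sum_tsum_compl (hX : ∀ i, Measurable (X i)) (hind : iIndepFun X P)
    (hsum : ∀ ω, Summable fun i => X i ω) (s : Finset ι) :
    (fun ω => ∑ i ∈ s, X i ω) ⟂ᵢ[P] fun ω => ∑' i : ↥((s : Set ι)ᶜ), X i ω := by
  let σ (t : Set ι) : MeasurableSpace Ω := ⨆ i ∈ t, MeasurableSpace.comap (X i) inferInstance
  have hσ {t : Set ι} {i : ι} (hi : i ∈ t) : Measurable[σ t] (X i) :=
    Measurable.of_comap_le (le_biSup (fun i => MeasurableSpace.comap (X i) inferInstance) hi)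
  have hindep : Indep (σ s) (σ (s : Set ι)ᶜ) P :=
    indep_iSup_of_disjoint (fun i => (hX i).comap_le) hind disjoint_compl_right
  have hhead : Measurable[σ s] fun ω => ∑ i ∈ s, X i ω :=
    s.measurable_fun_sum fun i hi => hσ hi
  have htail : Measurable[σ (s : Set ι)ᶜ] fun ω => ∑' i : ↥((s : Set ι)ᶜ), X i ω :=
    measurable_tsum (fun i => hσ i.2) fun ω => s.summable_compl_iff.2 (hsum ω)
  exact indep_of_indep_of_le_left (indep_of_indep_of_le_right hindep htail.comap_le) hhead.comap_le

theorem map_tsum_le_smul [IsProbabilityMeasure P] {ν : Measure E} [SFinite ν] [ν.IsAddLeftInvariant]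
    (hX : ∀ i, Measurable (X i)) (hind : iIndepFun X P) (hsum : ∀ ω, Summable fun i => X i ω)
    {s : Finset ι} {K : ℝ≥0∞} (hs : P.map (fun ω => ∑ i ∈ s, X i ω) ≤ K • ν) :
    P.map (fun ω => ∑' i, X i ω) ≤ K • ν := by
  have hsplit : (fun ω => ∑' i, X i ω) =
      (fun ω => ∑ i ∈ s, X i ω) + fun ω => ∑' i : ↥((s : Set ι)ᶜ), X i ω :=
    funext fun ω => ((hsum ω).sum_add_tsum_compl).symm
  have htail : Measurable fun ω => ∑' i : ↥((s : Set ι)ᶜ), X i ω :=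
    measurable_tsum (fun i => hX i) fun ω => s.summable_compl_iff.2 (hsum ω)
  have : IsProbabilityMeasure (P.map fun ω => ∑' i : ↥((s : Set ι)ᶜ), X i ω) :=
    Measure.isProbabilityMeasure_map htail.aemeasurable
  rw [hsplit, (indepFun_sum_tsum_compl hX hind hsum s).map_add_eq_map_conv_map
    (Finset.measurable_fun_sum s fun i _ => hX i) htail]
  exact conv_le_smul_of_le hs

end Indep

section RandomCosSeries

instance isProbabilityMeasure_volume_restrict_Icc_zero_one :
    IsProbabilityMeasure (volume.restrict (Icc (0 : ℝ) 1)) :=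
  ⟨by simp⟩

namespace IsUniformProductMeasure

variable {μ : Measure (ℕ → ℝ)}

theorem eq_infinitePi (hμ : IsUniformProductMeasure μ) :
    μ = Measure.infinitePi fun _ => volume.restrict (Icc (0 : ℝ) 1) :=
  Measure.eq_infinitePi _ hμ

theorem isProbabilityMeasure (hμ : IsUniformProductMeasure μ) : IsProbabilityMeasure μ :=
  hμ.eq_infinitePi ▸ inferInstance

theorem iIndepFun_comp (hμ : IsUniformProductMeasure μ) {X : ℕ → ℝ → ℝ}
    (hX : ∀ n, Measurable (X n)) : iIndepFun (fun n θ => X n (θ n)) μ :=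
  hμ.eq_infinitePi ▸ iIndepFun_infinitePi hX

theorem map_comp_eval (hμ : IsUniformProductMeasure μ) {φ : ℝ → ℝ} (hφ : Measurable φ) (n : ℕ) :
    μ.map (fun θ => φ (θ n)) = (volume.restrict (Icc (0 : ℝ) 1)).map φ := by
  rw [← Measure.infinitePi_map_eval (fun _ : ℕ => volume.restrict (Icc (0 : ℝ) 1)) n,
    ← hμ.eq_infinitePi, Measure.map_map hφ (measurable_pi_apply n)]
  rfl

end IsUniformProductMeasure

/-- The random cosine series with amplitudes `a`, deterministic phases `c` and random phases `θ`. -/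
noncomputable def randomCosSeries (a c θ : ℕ → ℝ) : ℝ :=
  ∑' n, a n * Real.cos (2 * π * (c n + θ n))

theorem summable_mul_of_abs_le {ι : Type*} {a x : ι → ℝ} {C : ℝ} (ha : Summable a)
    (hx : ∀ n, |x n| ≤ C) : Summable fun n => a n * x n :=
  .of_norm_bounded (ha.abs.mul_right C) fun n => by
    rw [Real.norm_eq_abs, abs_mul]
    exact mul_le_mul_of_nonneg_left (hx n) (abs_nonneg _)

theorem measurable_randomCosSeries {a : ℕ → ℝ} (ha : Summable a) (c : ℕ → ℝ) :
    Measurable (randomCosSeries a c) :=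
  measurable_tsum (fun n => by fun_prop) fun θ =>
    summable_mul_of_abs_le ha fun _ => Real.abs_cos_le_one _

theorem map_randomCosSeries_le {μ : Measure (ℕ → ℝ)} (hμ : IsUniformProductMeasure μ)
    {a : ℕ → ℝ} (ha : Summable a) (c : ℕ → ℝ) {δ : ℝ} (hδ : 0 < δ) {s : Finset ℕ}
    (hs : s.card = 3) (hδa : ∀ n ∈ s, δ ≤ |a n|) :
    μ.map (randomCosSeries a c) ≤
      (3 * (∫⁻ x, arcsineDensity x ^ (3 / 2 : ℝ)) ^ 2 / ENNReal.ofReal δ) • volume := by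
  have := hμ.isProbabilityMeasure
  let X (n : ℕ) (θ : ℕ → ℝ) : ℝ := a n * Real.cos (2 * π * (c n + θ n))
  have hX (n : ℕ) : Measurable (X n) := by fun_prop
  have hind : iIndepFun X μ :=
    hμ.iIndepFun_comp (X := fun n u => a n * Real.cos (2 * π * (c n + u))) fun n => by fun_prop
  have hlaw (n : ℕ) : μ.map (X n) = (volume.withDensity arcsineDensity).map (a n * ·) := by
    rw [← map_cos_eq_withDensity_arcsineDensity (c n), ← hμ.map_comp_eval (by fun_prop) n,
      Measure.map_map (by fun_prop) (by fun_prop)]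
    rfl
  have hsum (θ : ℕ → ℝ) : Summable fun n => X n θ :=
    summable_mul_of_abs_le ha fun _ => Real.abs_cos_le_one _
  refine map_tsum_le_smul hX hind hsum (s := s) ?_
  obtain ⟨i, j, k, hij, hik, hjk, rfl⟩ := Finset.card_eq_three.1 hs
  rw [map_sum_triple_eq_conv hX hind hij hik hjk, hlaw, hlaw, hlaw]
  exact conv_conv_map_mul_left_le measurable_arcsineDensity hδ (hδa i (by simp)) (hδa j (by simp))
    (hδa k (by simp))

end RandomCosSeries

section SquaredNorm

theorem lintegral_Ioi_comp_sq (φ : ℝ → ℝ≥0∞) :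
    2 * ∫⁻ r in Ioi 0, ENNReal.ofReal r * φ (r ^ 2) = ∫⁻ t in Ioi 0, φ t := by
  have himage : (fun r : ℝ => r ^ 2) '' Ioi 0 = Ioi 0 := by
    ext t
    refine ⟨?_, fun ht => ⟨√t, Real.sqrt_pos.2 ht, Real.sq_sqrt (le_of_lt ht)⟩⟩
    rintro ⟨r, hr, rfl⟩
    exact pow_pos (mem_Ioi.1 hr) 2
  have hinj : InjOn (fun r : ℝ => r ^ 2) (Ioi 0) := fun r hr t ht =>
    (pow_left_inj₀ (le_of_lt hr) (le_of_lt ht) two_ne_zero).1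
  conv_rhs => rw [← himage, lintegral_image_eq_lintegral_abs_deriv_mul measurableSet_Ioi
    (fun r _ => (hasDerivAt_pow 2 r).hasDerivWithinAt) hinj]
  rw [← lintegral_const_mul' _ _ (by simp)]
  refine setLIntegral_congr_fun measurableSet_Ioi fun r hr => ?_
  rw [abs_of_nonneg (by simpa using le_of_lt hr)]
  simp [ENNReal.ofReal_mul, mul_assoc]

theorem map_sq_add_sq_volume :
    (volume : Measure (ℝ × ℝ)).map (fun p => p.1 ^ 2 + p.2 ^ 2) =
      ENNReal.ofReal π • volume.restrict (Ioi 0) := by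
  refine Measure.ext_of_lintegral _ fun φ hφ => ?_
  have hpolar (p : ℝ × ℝ) : (polarCoord.symm p).1 ^ 2 + (polarCoord.symm p).2 ^ 2 = p.1 ^ 2 := by
    rw [polarCoord_symm_apply]
    linear_combination p.1 ^ 2 * Real.cos_sq_add_sin_sq p.2
  calc ∫⁻ t, φ t ∂(volume.map fun p : ℝ × ℝ => p.1 ^ 2 + p.2 ^ 2)
    _ = ∫⁻ p in Ioi (0 : ℝ) ×ˢ Ioo (-π) π, ENNReal.ofReal p.1 * φ (p.1 ^ 2) := by
      rw [lintegral_map hφ (by fun_prop), ← lintegral_comp_polarCoord_symm, polarCoord_target]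
      simp only [smul_eq_mul, hpolar]
    _ = ENNReal.ofReal (2 * π) * ∫⁻ r in Ioi 0, ENNReal.ofReal r * φ (r ^ 2) := by
      rw [Measure.volume_eq_prod, ← Measure.prod_restrict, lintegral_prod _ (by fun_prop)]
      simp only [lintegral_const, Measure.restrict_apply_univ, Real.volume_Ioo]
      rw [lintegral_mul_const _ (by fun_prop), mul_comm, sub_neg_eq_add, two_mul]
    _ = ∫⁻ t, φ t ∂(ENNReal.ofReal π • volume.restrict (Ioi 0)) := by
      rw [lintegral_smul_measure, ← lintegral_Ioi_comp_sq φ, smul_eq_mul, mul_comm 2 π,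
        ENNReal.ofReal_mul Real.pi_nonneg, ENNReal.ofReal_ofNat, mul_assoc]

theorem map_sq_add_sq_prod_le {κ ρ : Measure ℝ} [SFinite ρ] {K : ℝ≥0∞}
    (hκ : κ ≤ K • volume) (hρ : ρ ≤ K • volume) :
    (κ.prod ρ).map (fun p => p.1 ^ 2 + p.2 ^ 2) ≤ (ENNReal.ofReal π * K ^ 2) • volume := calc
  (κ.prod ρ).map (fun p => p.1 ^ 2 + p.2 ^ 2)
  _ ≤ ((K • volume).prod (K • volume)).map fun p : ℝ × ℝ => p.1 ^ 2 + p.2 ^ 2 :=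
    Measure.map_mono (Measure.prod_mono hκ hρ) (by fun_prop)
  _ = K ^ 2 • ENNReal.ofReal π • volume.restrict (Ioi 0) := by
    rw [Measure.prod_smul_left, Measure.prod_smul_right, ← Measure.volume_eq_prod, smul_smul,
      Measure.map_smul, map_sq_add_sq_volume, sq]
  _ ≤ (ENNReal.ofReal π * K ^ 2) • volume := by
    rw [smul_smul, mul_comm]
    gcongr
    exact Measure.restrict_le_self

end SquaredNorm

section Density

theorem exists_bounded_density {α : Type*} [MeasurableSpace α] {ν μ : Measure α} [SigmaFinite μ]
    [SFinite ν] {C : ℝ} (hC : 0 ≤ C) (hν : ν ≤ ENNReal.ofReal C • μ) :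
    ∃ h : α → ℝ, (∀ t, 0 ≤ h t) ∧ ν = μ.withDensity (fun t => ENNReal.ofReal (h t)) ∧
      ∀ t, h t ≤ C := by
  have hac : ν ≪ μ := Measure.absolutelyContinuous_of_le_smul hν
  have hle : ν.rnDeriv μ ≤ᵐ[μ] fun _ => ENNReal.ofReal C := by
    refine ae_le_of_forall_setLIntegral_le_of_sigmaFinite (ν.measurable_rnDeriv μ) fun s _ _ => ?_
    rw [setLIntegral_const]
    exact (Measure.setLIntegral_rnDeriv_le s).trans (hν s)
  refine ⟨fun t => (min (ν.rnDeriv μ t) (ENNReal.ofReal C)).toReal,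
    fun t => ENNReal.toReal_nonneg, ?_, fun t => ?_⟩
  · conv_lhs => rw [← Measure.withDensity_rnDeriv_eq ν μ hac]
    refine withDensity_congr_ae ?_
    filter_upwards [hle] with t ht
    rw [ENNReal.ofReal_toReal (by simp), min_eq_left ht]
  · exact ENNReal.toReal_le_of_le_ofReal hC (min_le_right _ _)

end Density

section Increments

theorem cos_two_pi_mul_sub_cos_two_pi_mul (u v : ℝ) :
    Real.cos (2 * π * u) - Real.cos (2 * π * v) =
      2 * Real.sin (π * (u - v)) * Real.cos (2 * π * ((u + v) / 2 + 1 / 4)) := by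
  rw [Real.cos_sub_cos, show 2 * π * ((u + v) / 2 + 1 / 4) = (2 * π * u + 2 * π * v) / 2 + π / 2 by
    ring, show π * (u - v) = (2 * π * u - 2 * π * v) / 2 by ring, Real.cos_add_pi_div_two]
  ring

theorem sin_two_pi_mul_sub_sin_two_pi_mul (u v : ℝ) :
    Real.sin (2 * π * u) - Real.sin (2 * π * v) =
      2 * Real.sin (π * (u - v)) * Real.cos (2 * π * ((u + v) / 2)) := by
  rw [Real.sin_sub_sin, show 2 * π * ((u + v) / 2) = (2 * π * u + 2 * π * v) / 2 by ring,
    show π * (u - v) = (2 * π * u - 2 * π * v) / 2 by ring]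

/-- Amplitude of the `n`-th term of the increment of either coordinate of the Weierstrass function
between two points at signed distance `d`. -/
noncomputable def incrementAmplitude (b β d : ℝ) (n : ℕ) : ℝ :=
  b ^ (-β * (n : ℝ)) * (2 * Real.sin (π * (b ^ n * d)))

variable {b β : ℝ}

theorem summable_rpow_neg_mul_natCast (hb : 1 < b) (hβ : 0 < β) :
    Summable fun n : ℕ => b ^ (-β * (n : ℝ)) := by
  simp only [Real.rpow_mul (zero_le_one.trans hb.le), Real.rpow_natCast]
  exact summable_geometric_of_lt_one (Real.rpow_nonneg (zero_le_one.trans hb.le) _)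
    (Real.rpow_lt_one_of_one_lt_of_neg hb (neg_lt_zero.2 hβ))

theorem summable_incrementAmplitude (hb : 1 < b) (hβ : 0 < β) (d : ℝ) :
    Summable (incrementAmplitude b β d) :=
  summable_mul_of_abs_le (C := 2) (summable_rpow_neg_mul_natCast hb hβ) fun n => by
    rw [abs_mul, abs_two]
    linarith [Real.abs_sin_le_one (π * (b ^ n * d))]

theorem W1_sub_W1 (hb : 1 < b) (hβ : 0 < β) (θ : ℕ → ℝ) (x y : ℝ) :
    W1 b β θ x - W1 b β θ y =
      randomCosSeries (incrementAmplitude b β (x - y))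
        (fun n => b ^ n * (x + y) / 2 + 1 / 4) θ := by
  have hsum (t : ℝ) := summable_mul_of_abs_le (summable_rpow_neg_mul_natCast hb hβ) fun n =>
    Real.abs_cos_le_one (2 * π * (b ^ n * t + θ n))
  rw [W1, W1, ← (hsum x).tsum_sub (hsum y), randomCosSeries]
  refine tsum_congr fun n => ?_
  rw [← mul_sub, cos_two_pi_mul_sub_cos_two_pi_mul, incrementAmplitude]
  ring_nf

theorem W2_sub_W2 (hb : 1 < b) (hβ : 0 < β) (lam : ℕ → ℝ) (x y : ℝ) :
    W2 b β lam x - W2 b β lam y =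
      randomCosSeries (incrementAmplitude b β (x - y)) (fun n => b ^ n * (x + y) / 2) lam := by
  have hsum (t : ℝ) := summable_mul_of_abs_le (summable_rpow_neg_mul_natCast hb hβ) fun n =>
    Real.abs_sin_le_one (2 * π * (b ^ n * t + lam n))
  rw [W2, W2, ← (hsum x).tsum_sub (hsum y), randomCosSeries]
  refine tsum_congr fun n => ?_
  rw [← mul_sub, sin_two_pi_mul_sub_sin_two_pi_mul, incrementAmplitude]
  ring_nf

theorem abs_incrementAmplitude (hb : 0 ≤ b) (d : ℝ) (n : ℕ) :
    |incrementAmplitude b β d n| = (b ^ n) ^ (-β) * (2 * |Real.sin (π * (b ^ n * |d|))|) := by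
  have hsin : |Real.sin (π * (b ^ n * d))| = |Real.sin (π * (b ^ n * |d|))| := by
    obtain h | h := abs_choice d <;> simp only [h, mul_neg, Real.sin_neg, abs_neg]
  rw [incrementAmplitude, abs_mul, abs_mul, abs_two, hsin, abs_of_nonneg (by positivity),
    mul_comm (-β), Real.rpow_mul hb, Real.rpow_natCast]

theorem le_abs_incrementAmplitude (hb : 0 < b) (hβ : 0 ≤ β) {d : ℝ} (hd : d ≠ 0) {n : ℕ}
    (hle : b ^ n * |d| ≤ 1 / 2) :
    4 * (b ^ n * |d|) * |d| ^ β ≤ |incrementAmplitude b β d n| := by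
  have hd' : 0 < |d| := abs_pos.2 hd
  have hsin : 2 * (b ^ n * |d|) ≤ |Real.sin (π * (b ^ n * |d|))| := calc
    2 * (b ^ n * |d|) = 2 / π * (π * (b ^ n * |d|)) := by field_simp
    _ ≤ Real.sin (π * (b ^ n * |d|)) :=
      Real.mul_le_sin (by positivity) (by nlinarith [Real.pi_pos])
    _ ≤ _ := le_abs_self _
  have hpow : |d| ^ β ≤ (b ^ n) ^ (-β) := by
    rw [Real.rpow_neg (by positivity), ← Real.inv_rpow (by positivity)]
    gcongr
    rw [← one_div, le_div_iff₀ (by positivity)]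
    linarith
  rw [abs_incrementAmplitude hb.le]
  calc 4 * (b ^ n * |d|) * |d| ^ β = |d| ^ β * (2 * (2 * (b ^ n * |d|))) := by ring
    _ ≤ (b ^ n) ^ (-β) * (2 * |Real.sin (π * (b ^ n * |d|))|) := by gcongr

theorem exists_card_eq_three_le_pow_mul (hb : 1 < b) {d : ℝ} (hd : 0 < d)
    (hdb : d ≤ 1 / (2 * b ^ 2)) :
    ∃ s : Finset ℕ, s.card = 3 ∧ ∀ n ∈ s, 1 / (2 * b ^ 3) ≤ b ^ n * d ∧ b ^ n * d ≤ 1 / 2 := by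
  have hb0 : 0 < b := one_pos.trans hb
  obtain ⟨m, hm, hm'⟩ := exists_nat_pow_near (x := 1 / (2 * b ^ 2 * d))
    (by rw [one_le_div (by positivity)]; rwa [le_div_iff₀' (by positivity)] at hdb) hb
  rw [le_div_iff₀ (by positivity)] at hm
  rw [div_lt_iff₀ (by positivity)] at hm'
  refine ⟨Finset.Icc m (m + 2), by rw [Nat.card_Icc]; lia, fun n hn => ?_⟩
  obtain ⟨hmn, hnm⟩ := Finset.mem_Icc.1 hn
  constructor
  · calc 1 / (2 * b ^ 3) ≤ b ^ m * d := by
          rw [div_le_iff₀ (by positivity)]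
          linear_combination hm'.le
      _ ≤ b ^ n * d := by gcongr; exact hb.le
  · calc b ^ n * d ≤ b ^ (m + 2) * d := by gcongr; exact hb.le
      _ ≤ 1 / 2 := by linear_combination hm / 2

theorem exists_card_eq_three_le_abs_incrementAmplitude (hb : 1 < b) (hβ : 0 ≤ β) {d : ℝ}
    (hd : d ≠ 0) (hdb : |d| ≤ 1 / (2 * b ^ 2)) :
    ∃ s : Finset ℕ, s.card = 3 ∧ ∀ n ∈ s, 2 / b ^ 3 * |d| ^ β ≤ |incrementAmplitude b β d n| := by
  have hb0 : 0 < b := one_pos.trans hb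
  obtain ⟨s, hcard, hs⟩ := exists_card_eq_three_le_pow_mul hb (abs_pos.2 hd) hdb
  refine ⟨s, hcard, fun n hn => ?_⟩
  calc 2 / b ^ 3 * |d| ^ β = 4 * (1 / (2 * b ^ 3)) * |d| ^ β := by field_simp; norm_num
    _ ≤ 4 * (b ^ n * |d|) * |d| ^ β := by gcongr; exact (hs n hn).1
    _ ≤ _ := le_abs_incrementAmplitude hb0 hβ hd (hs n hn).2

end Increments

section SquaredDistance

variable {b β : ℝ} {μ : Measure (ℕ → ℝ)}

theorem Wdist_sq (b β : ℝ) (θ lam : ℕ → ℝ) (x y : ℝ) :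
    Wdist b β θ lam x y ^ 2 =
      (W1 b β θ x - W1 b β θ y) ^ 2 + (W2 b β lam x - W2 b β lam y) ^ 2 :=
  Real.sq_sqrt (by positivity)

theorem measurable_W1_sub_W1 (hb : 1 < b) (hβ : 0 < β) (x y : ℝ) :
    Measurable fun θ => W1 b β θ x - W1 b β θ y := by
  simp only [W1_sub_W1 hb hβ]
  exact measurable_randomCosSeries (summable_incrementAmplitude hb hβ _) _

theorem measurable_W2_sub_W2 (hb : 1 < b) (hβ : 0 < β) (x y : ℝ) :
    Measurable fun lam => W2 b β lam x - W2 b β lam y := by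
  simp only [W2_sub_W2 hb hβ]
  exact measurable_randomCosSeries (summable_incrementAmplitude hb hβ _) _

theorem map_Wdist_sq [SFinite μ] (hb : 1 < b) (hβ : 0 < β) (x y : ℝ) :
    (μ.prod μ).map (fun p => Wdist b β p.1 p.2 x y ^ 2) =
      ((μ.map fun θ => W1 b β θ x - W1 b β θ y).prod
        (μ.map fun lam => W2 b β lam x - W2 b β lam y)).map fun p => p.1 ^ 2 + p.2 ^ 2 := by
  have h₁ := measurable_W1_sub_W1 hb hβ x y
  have h₂ := measurable_W2_sub_W2 hb hβ x y
  rw [Measure.map_prod_map _ _ h₁ h₂, Measure.map_map (by fun_prop) (h₁.prodMap h₂)]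
  simp only [Wdist_sq]
  rfl

theorem map_Wdist_sq_le (hb : 1 < b) (hβ : 0 < β) (hμ : IsUniformProductMeasure μ) {x y : ℝ}
    (hxy : x ≠ y) (hxyb : |x - y| ≤ 1 / (2 * b ^ 2)) :
    (μ.prod μ).map (fun p => Wdist b β p.1 p.2 x y ^ 2) ≤
      (ENNReal.ofReal π * (3 * (∫⁻ s, arcsineDensity s ^ (3 / 2 : ℝ)) ^ 2 /
        ENNReal.ofReal (2 / b ^ 3 * |x - y| ^ β)) ^ 2) • volume := by
  have := hμ.isProbabilityMeasure
  have hd : 0 < |x - y| := abs_pos.2 (sub_ne_zero.2 hxy)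
  have hb0 : 0 < b := one_pos.trans hb
  obtain ⟨s, hs, hδ⟩ :=
    exists_card_eq_three_le_abs_incrementAmplitude hb hβ.le (sub_ne_zero.2 hxy) hxyb
  have hlaw (c : ℕ → ℝ) := map_randomCosSeries_le hμ
    (summable_incrementAmplitude hb hβ (x - y)) c (by positivity) hs hδ
  rw [map_Wdist_sq hb hβ]
  simp only [W1_sub_W1 hb hβ, W2_sub_W2 hb hβ]
  exact map_sq_add_sq_prod_le (hlaw _) (hlaw _)

theorem ofReal_mul_sq_div_sq_eq {I : ℝ≥0∞} (hI : I ≠ ∞) {c d : ℝ} (hc : 0 < c) (hd : 0 < d)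
    (β : ℝ) :
    ENNReal.ofReal π * (3 * I ^ 2 / ENNReal.ofReal (c * d ^ β)) ^ 2 =
      ENNReal.ofReal (π * (3 * I.toReal ^ 2 / c) ^ 2 * d ^ (-(2 * β))) := by
  have hβd : (d ^ β)⁻¹ ^ 2 = d ^ (-(2 * β)) := by
    rw [← Real.rpow_neg hd.le, ← Real.rpow_mul_natCast hd.le]
    ring_nf
  have hcd : 0 < c * d ^ β := by positivity
  nth_rw 1 [← ENNReal.ofReal_toReal hI]
  rw [← ENNReal.ofReal_ofNat 3, ← ENNReal.ofReal_pow (by positivity),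
    ← ENNReal.ofReal_mul (by norm_num), ← ENNReal.ofReal_div_of_pos hcd,
    ← ENNReal.ofReal_pow (by positivity), ← ENNReal.ofReal_mul Real.pi_nonneg, ← hβd,
    div_mul_eq_div_div, div_eq_mul_inv _ (d ^ β), mul_pow, mul_assoc]

theorem stmt_10_general {b β : ℝ} (hb : 1 < b) (hβ : 0 < β) {μ : Measure (ℕ → ℝ)}
    (hμ : IsUniformProductMeasure μ) :
    ∃ C₁ > (0 : ℝ), ∀ x y : ℝ, 0 < |x - y| → |x - y| ≤ 1 / (2 * b ^ 2) →
      ∃ h : ℝ → ℝ, (∀ t, 0 ≤ h t) ∧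
        Measure.map (fun p : (ℕ → ℝ) × (ℕ → ℝ) => (Wdist b β p.1 p.2 x y) ^ 2)
            (μ.prod μ) =
          volume.withDensity (fun t => ENNReal.ofReal (h t)) ∧
        ∀ t, h t ≤ C₁ * |x - y| ^ (-(2 * β)) := by
  have := hμ.isProbabilityMeasure
  let I := ∫⁻ s, arcsineDensity s ^ (3 / 2 : ℝ)
  have hI : I ≠ ∞ := lintegral_arcsineDensity_rpow_lt_top.ne
  refine ⟨π * (3 * I.toReal ^ 2 / (2 / b ^ 3)) ^ 2 + 1, by positivity, fun x y hxy hxyb => ?_⟩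
  have hle := map_Wdist_sq_le hb hβ hμ (sub_ne_zero.1 (abs_pos.1 hxy)) hxyb
  rw [ofReal_mul_sq_div_sq_eq hI (by positivity) hxy] at hle
  refine exists_bounded_density (by positivity) (hle.trans ?_)
  gcongr
  exact le_add_of_nonneg_right zero_le_one

end SquaredDistance

end

/-- there is `C₁ > 0` (depending only on `b`, `β`) such that for all
`x, y ∈ [0,1]` with `0 < |x-y| ≤ 1/(2b²)`, the random variable
`X(Θ,Λ) = |f_{Θ,Λ}(x) - f_{Θ,Λ}(y)|²` has a probability density function `h`
with respect to Lebesgue measure, and `h(t) ≤ C₁ |x-y|^{-2β}` for all `t`. -/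
theorem stmt_10 (b β : ℝ) (hb : 1 < b) (hβ : β ∈ Set.Ioo (0 : ℝ) (1 / 2))
    (μ : Measure (ℕ → ℝ)) (hμ : IsUniformProductMeasure μ) :
    ∃ C₁ > (0 : ℝ), ∀ x ∈ Set.Icc (0 : ℝ) 1, ∀ y ∈ Set.Icc (0 : ℝ) 1,
      0 < |x - y| → |x - y| ≤ 1 / (2 * b ^ 2) →
      ∃ h : ℝ → ℝ, (∀ t, 0 ≤ h t) ∧
        Measure.map (fun p : (ℕ → ℝ) × (ℕ → ℝ) => (Wdist b β p.1 p.2 x y) ^ 2)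
            (μ.prod μ) =
          volume.withDensity (fun t => ENNReal.ofReal (h t)) ∧
        ∀ t, h t ≤ C₁ * |x - y| ^ (-(2 * β)) :=
  let ⟨C₁, hC₁, h⟩ := stmt_10_general hb hβ.1 hμ
  ⟨C₁, hC₁, fun x _ y _ => h x y⟩
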